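/- Let {f_α}_{α∈A} : 𝒮_X → 𝒮_Y be a morphism between two πτ-spectra with surjective limit projections, let f = lim f_α be the limit map, let o ∈ A and let U_o ⊆ X_o be a non-empty open set such that the image f(U) of U = p_o⁻¹(U_o) is nowhere dense in lim 𝒮_Y, and let C be a cofinal subset of A. Then for any index α ∈ C with α ≥ o there is an index β ∈ C with β ≥ α such that for any non-empty open set V_α ⊆ Y_α there is a non-empty open set W_β ⊆ Y_β with π_β⁻¹(W_β) ⊆ π_α⁻¹(V_α) \\ f(U). -/

import Mathlib

open Set Topology

universe u

/-- A continuous map `f : X → Y` is *skeletal* if for every non-empty open `U ⊆ X` the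
closure of `f(U)` has non-empty interior. -/
def Skeletal {X Y : Type*} [TopologicalSpace X] [TopologicalSpace Y] (f : X → Y) : Prop :=
  ∀ U : Set X, IsOpen U → U.Nonempty → (interior (closure (f '' U))).Nonempty

/-- A commutative square (top map `g' : X' → Y'`, bottom map `g : X → Y`, vertical maps
`qX : X' → X`, `qY : Y' → Y`) is *skeletal* if for each point `x ∈ X` and each neighborhood
`U` of `x` there is a non-empty open `V ⊆ Y` with `V ⊆ cl (g '' U)` and
`qY ⁻¹' V ⊆ cl (g' '' (qX ⁻¹' U))`. -/
def SkeletalSquare {X Y X' Y' : Type*} [TopologicalSpace X] [TopologicalSpace Y]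
    [TopologicalSpace X'] [TopologicalSpace Y']
    (g' : X' → Y') (g : X → Y) (qX : X' → X) (qY : Y' → Y) : Prop :=
  ∀ x : X, ∀ U ∈ 𝓝 x, ∃ V : Set Y, IsOpen V ∧ V.Nonempty ∧ V ⊆ closure (g '' U) ∧
    qY ⁻¹' V ⊆ closure (g' '' (qX ⁻¹' U))

/-- An *inverse spectrum* over a partially ordered index set `A`: topological spaces `X a`
together with continuous bonding maps `bond h : X b → X a` for `h : a ≤ b`, satisfying the
usual identity and composition laws. -/
structure InvSpec (A : Type u) [PartialOrder A] : Type (u + 1) where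
  X : A → Type u
  [topX : ∀ a, TopologicalSpace (X a)]
  bond : ∀ {a b : A}, a ≤ b → X b → X a
  bond_cont : ∀ {a b : A} (h : a ≤ b), Continuous (bond h)
  bond_refl : ∀ (a : A) (x : X a), bond le_rfl x = x
  bond_comp : ∀ {a b c : A} (hab : a ≤ b) (hbc : b ≤ c) (x : X c),
    bond hab (bond hbc x) = bond (hab.trans hbc) x

attribute [instance] InvSpec.topX

variable {A : Type u} [PartialOrder A]

/-- The limit `lim 𝒮` of an inverse spectrum, as the set of threads in the product. -/
def InvSpec.limitSet (S : InvSpec A) : Set (∀ a, S.X a) :=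
  {x | ∀ (a b : A) (h : a ≤ b), S.bond h (x b) = x a}

/-- The limit projection `p_a : lim 𝒮 → X a`. -/
def InvSpec.proj (S : InvSpec A) (a : A) : S.limitSet → S.X a := fun x => x.1 a

/-- A *morphism* between two inverse spectra over the same index set: a family of continuous
maps `f a : X a → Y a` commuting with the bonding maps. -/
structure SpecMor (S T : InvSpec A) where
  maps : ∀ a, S.X a → T.X a
  maps_cont : ∀ a, Continuous (maps a)
  comm : ∀ {a b : A} (h : a ≤ b) (x : S.X b), maps a (S.bond h x) = T.bond h (maps b x)

/-- The limit map `lim f_a : lim 𝒮_X → lim 𝒮_Y` of a morphism of spectra. -/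
def SpecMor.limMap {S T : InvSpec A} (F : SpecMor S T) : S.limitSet → T.limitSet :=
  fun x => ⟨fun a => F.maps a (x.1 a),
    fun a b h => by rw [← F.comm h (x.1 b), x.2 a b h]⟩

/-- The *limit `↓a`-square* of a morphism (top map `lim f`, bottom map `f a`, verticals the
limit projections) is skeletal. -/
def LimitSquareSkeletal {S T : InvSpec A} (F : SpecMor S T) (a : A) : Prop :=
  SkeletalSquare F.limMap (F.maps a) (S.proj a) (T.proj a)

/-- The *bonding `↓_a^b`-square* of a morphism (top map `f b`, bottom map `f a`, verticals
the bonding maps) is skeletal. -/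
def BondingSquareSkeletal {S T : InvSpec A} (F : SpecMor S T) {a b : A} (h : a ≤ b) : Prop :=
  SkeletalSquare (F.maps b) (F.maps a) (S.bond h) (T.bond h)

/-- A family of non-empty open sets is a *π-base* if every non-empty open set contains a
member of the family. -/
def IsPiBase {Z : Type*} [TopologicalSpace Z] (B : Set (Set Z)) : Prop :=
  (∀ U ∈ B, IsOpen U ∧ U.Nonempty) ∧
  ∀ U : Set Z, IsOpen U → U.Nonempty → ∃ V ∈ B, V ⊆ U

/-- The *π-weight* of a space: the smallest cardinality of a π-base. -/
noncomputable def piWeight (Z : Type u) [TopologicalSpace Z] : Cardinal.{u} :=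
  ⨅ B : {B : Set (Set Z) // IsPiBase B}, Cardinal.mk B.1

/-- A partially ordered set is *κ-directed* if every subset of cardinality `≤ κ` has an
upper bound. -/
def CardDirected (A : Type u) [PartialOrder A] (κ : Cardinal.{u}) : Prop :=
  ∀ K : Set A, Cardinal.mk K ≤ κ → ∃ ub : A, ∀ k ∈ K, k ≤ ub

/-- A partially ordered set is *ω-complete* if every (non-empty) countable chain has a least
upper bound. -/
def OmegaComplete (A : Type u) [PartialOrder A] : Prop :=
  ∀ C : Set A, C.Countable → C.Nonempty → IsChain (· ≤ ·) C → ∃ b : A, IsLUB C b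

/-- The limit of the restriction of a spectrum to a subset `C` of the index set. -/
def InvSpec.limitSetOn (S : InvSpec A) (C : Set A) : Set (∀ c : C, S.X c) :=
  {x | ∀ (c d : C) (h : (c : A) ≤ (d : A)), S.bond h (x d) = x c}

/-- The canonical map `X g → lim {X a, a ∈ C}` when `g` is a least upper bound of `C`. -/
def InvSpec.toLimitOn (S : InvSpec A) {C : Set A} {g : A} (hg : IsLUB C g) :
    S.X g → S.limitSetOn C :=
  fun xg => ⟨fun c => S.bond (hg.1 c.2) xg, fun c d h => S.bond_comp h (hg.1 d.2) xg⟩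

/-- A spectrum is *continuous* (τ-continuous) if for every non-empty directed subset `C` of
the index set having a least upper bound `g`, the canonical map `X g → lim {X a, a ∈ C}` is
a homeomorphism. -/
def InvSpec.IsContinuousSpectrum (S : InvSpec A) : Prop :=
  ∀ (C : Set A) (g : A), C.Nonempty → DirectedOn (· ≤ ·) C → ∀ hg : IsLUB C g,
    IsHomeomorph (S.toLimitOn hg)

/-- A *πτ-spectrum*: all spaces have π-weight `≤ τ`, the index set is τ-directed and
ω-complete, and the spectrum is τ-continuous. -/
def IsPiTauSpectrum (τ : Cardinal.{u}) (S : InvSpec A) : Prop :=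
  (∀ a : A, piWeight (S.X a) ≤ τ) ∧ CardDirected A τ ∧ OmegaComplete A ∧
    S.IsContinuousSpectrum

/-- A subset `C` of a directed poset is *cofinal* if every element of the poset is below
some element of `C`. -/
def IsCofinalSub {A : Type u} [PartialOrder A] (C : Set A) : Prop :=
  ∀ a : A, ∃ b ∈ C, a ≤ b

/-- A subset `C` is *τ-closed* (equivalently ω-closed) if for each (non-empty) directed
subset `D ⊆ C` having a least upper bound in `A`, this least upper bound belongs to `C`. -/
def IsSupClosed {A : Type u} [PartialOrder A] (C : Set A) : Prop :=
  ∀ D ⊆ C, D.Nonempty → DirectedOn (· ≤ ·) D → ∀ g : A, IsLUB D g → g ∈ C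

/-- Over a directed index set, the sets `π_c⁻¹(W)` with `W ⊆ X c` open form a base of the
limit of an inverse spectrum. -/
theorem InvSpec.exists_proj_preimage_subset (S : InvSpec A)
    (hdir : ∀ I : Finset A, ∃ c, ∀ i ∈ I, i ≤ c)
    {O : Set S.limitSet} (hO : IsOpen O) {y : S.limitSet} (hy : y ∈ O) :
    ∃ (c : A) (W : Set (S.X c)), IsOpen W ∧ S.proj c y ∈ W ∧ S.proj c ⁻¹' W ⊆ O := by
  obtain ⟨G, hG, rfl⟩ := isOpen_induced_iff.1 hO
  obtain ⟨I, u, hu, hsub⟩ := isOpen_pi_iff.1 hG y.1 hy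
  obtain ⟨c, hc⟩ := hdir I
  refine ⟨c, ⋂ i : I, S.bond (hc i i.2) ⁻¹' u i,
    isOpen_iInter_of_finite fun i => (hu i i.2).1.preimage (S.bond_cont _), ?_, ?_⟩
  · refine mem_iInter.2 fun i => ?_
    rw [mem_preimage, InvSpec.proj, y.2 i c (hc i i.2)]
    exact (hu i i.2).2
  · intro z hz
    refine hsub fun i hi => ?_
    have hzi := mem_iInter.1 hz ⟨i, hi⟩
    rwa [mem_preimage, InvSpec.proj, z.2 i c (hc i hi)] at hzi

/-- The limit projections are continuous. -/
theorem InvSpec.continuous_proj (S : InvSpec A) (a : A) : Continuous (S.proj a) :=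
  (continuous_apply a).comp continuous_subtype_val

/-- The π-weight is attained by some π-base. -/
theorem exists_isPiBase_mk_eq_piWeight (Z : Type u) [TopologicalSpace Z] :
    ∃ B : Set (Set Z), IsPiBase B ∧ Cardinal.mk B = piWeight Z := by
  have : Nonempty {B : Set (Set Z) // IsPiBase B} :=
    ⟨⟨{U | IsOpen U ∧ U.Nonempty}, fun _ h => h, fun U h₁ h₂ => ⟨U, ⟨h₁, h₂⟩, Subset.rfl⟩⟩⟩
  obtain ⟨B, hB⟩ := ciInf_mem fun B : {B : Set (Set Z) // IsPiBase B} => Cardinal.mk B.1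
  exact ⟨B.1, B.2, hB⟩

/-- Let `F` be a morphism between two πτ-spectra with surjective limit projections,
`f = lim f_a` its limit map, `o` an index and `U_o ⊆ X o` a non-empty open set such that
`f(U)`, with `U = p_o⁻¹(U_o)`, is nowhere dense in `lim 𝒮_Y`, and let `C ⊆ A` be cofinal.
Then for any `a ∈ C` with `a ≥ o` there is `b ∈ C` with `b ≥ a` such that every non-empty
open `V ⊆ Y a` admits a non-empty open `W ⊆ Y b` with
`π_b⁻¹(W) ⊆ π_a⁻¹(V) \ f(U)`. -/
theorem exists_avoiding_index {A : Type u} [PartialOrder A] [Nonempty A]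
    (τ : Cardinal.{u}) (hτ : Cardinal.aleph0 ≤ τ) (S T : InvSpec A) (F : SpecMor S T)
    (hSτ : IsPiTauSpectrum τ S) (hTτ : IsPiTauSpectrum τ T)
    (hS : ∀ a : A, Function.Surjective (S.proj a))
    (hT : ∀ a : A, Function.Surjective (T.proj a))
    (o : A) (Uo : Set (S.X o)) (hUo : IsOpen Uo) (hUone : Uo.Nonempty)
    (hnd : IsNowhereDense (F.limMap '' (S.proj o ⁻¹' Uo)))
    (C : Set A) (hC : IsCofinalSub C) :
    ∀ a ∈ C, o ≤ a → ∃ b ∈ C, a ≤ b ∧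
      ∀ V : Set (T.X a), IsOpen V → V.Nonempty →
        ∃ W : Set (T.X b), IsOpen W ∧ W.Nonempty ∧
          T.proj b ⁻¹' W ⊆ T.proj a ⁻¹' V \ F.limMap '' (S.proj o ⁻¹' Uo) := by
  classical
  intro a _ _
  obtain ⟨hw, hdirτ, -, -⟩ := hTτ
  have hdir : ∀ I : Finset A, ∃ c, ∀ i ∈ I, i ≤ c := fun I =>
    hdirτ (I : Set A) (((Cardinal.lt_aleph0_of_finite (I : Set A)).le).trans hτ)
  obtain ⟨B, hB, hBcard⟩ := exists_isPiBase_mk_eq_piWeight (T.X a)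
  have key : ∀ V : B, ∃ (c : A) (W : Set (T.X c)), IsOpen W ∧ W.Nonempty ∧
      T.proj c ⁻¹' W ⊆ T.proj a ⁻¹' V.1 \ F.limMap '' (S.proj o ⁻¹' Uo) := by
    rintro ⟨V, hV⟩
    have hVo : IsOpen (T.proj a ⁻¹' V) := (hB.1 V hV).1.preimage (T.continuous_proj a)
    obtain ⟨y, hyV, hy⟩ : (T.proj a ⁻¹' V \ closure (F.limMap '' (S.proj o ⁻¹' Uo))).Nonempty := by
      rw [sdiff_nonempty]
      intro hsub
      obtain ⟨y, hy⟩ := (hB.1 V hV).2.preimage (hT a)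
      have := interior_maximal hsub hVo hy
      rwa [hnd] at this
    obtain ⟨c, W, hWo, hyW, hW⟩ := T.exists_proj_preimage_subset hdir
      (hVo.sdiff isClosed_closure) ⟨hyV, hy⟩
    exact ⟨c, W, hWo, ⟨_, hyW⟩, hW.trans (sdiff_subset_sdiff_right subset_closure)⟩
  choose c W hWo hWne hW using key
  obtain ⟨d, hd⟩ := hdirτ (range c) (Cardinal.mk_range_le.trans (hBcard.le.trans (hw a)))
  obtain ⟨e, he⟩ := hdir {a, d}
  obtain ⟨b, hbC, heb⟩ := hC e
  have hdb : d ≤ b := (he d (by simp)).trans heb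
  refine ⟨b, hbC, (he a (by simp)).trans heb, fun V hVo hVne => ?_⟩
  obtain ⟨V₀, hBV₀, hV₀V⟩ := hB.2 V hVo hVne
  have hcb : c ⟨V₀, hBV₀⟩ ≤ b := (hd _ (mem_range_self _)).trans hdb
  have hproj : T.proj b ⁻¹' (T.bond hcb ⁻¹' W ⟨V₀, hBV₀⟩) = T.proj _ ⁻¹' W ⟨V₀, hBV₀⟩ := by
    ext z
    rw [mem_preimage, mem_preimage, mem_preimage, InvSpec.proj, z.2 _ _ hcb, InvSpec.proj]
  refine ⟨T.bond hcb ⁻¹' W ⟨V₀, hBV₀⟩, (hWo _).preimage (T.bond_cont hcb), ?_, ?_⟩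
  · obtain ⟨z, hz⟩ := (hWne ⟨V₀, hBV₀⟩).preimage (hT _)
    rw [← hproj] at hz
    exact ⟨_, hz⟩
  · rw [hproj]
    exact (hW _).trans (sdiff_subset_sdiff_left (preimage_mono hV₀V))
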